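/- (Lower bound on the noise-strength function) For every integer M ≥ 1 and every real τ with 0 < τ ≤ 1/√(6M), the quantity f(M, τ) = F/G, where F = (2/3)·√((1−τ²)/τ²) − ( √( (5/4)M − 7/4 + 1/(2M) ) + √(M/12) ) and G = (4/3)·√(1−τ²) + 1, satisfies f(M, τ) ≥ 0.03·√M. -/

import Mathlib

/-! The constraint on `τ` gives `(1 - τ²)/τ² ≥ 6M - 1 ≥ 5M`, and `(5/4)M - 7/4 + 1/(2M) ≤ (5/4)M`
because `1/(2M) ≤ 7/4`. Measured in units of `√M`, the numerator is therefore at least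
`(2/3)√5 - √5/2 - √3/6 = (√5 - √3)/6 ≥ 0.07`, which is exactly `0.03` times the upper bound `7/3`
of the denominator. -/

section

variable {m τ : ℝ}

theorem sub_one_le_one_sub_sq_div_sq {c : ℝ} (hτ0 : 0 < τ) (hτ1 : τ ≤ 1 / √c) :
    c - 1 ≤ (1 - τ ^ 2) / τ ^ 2 := by
  have sqrt_c_pos : 0 < √c := one_div_pos.mp (hτ0.trans_le hτ1)
  have c_le : c ≤ (1 / τ) ^ 2 := (Real.sqrt_le_iff.mp ((le_one_div hτ0 sqrt_c_pos).mp hτ1)).2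
  calc
    c - 1 ≤ (1 / τ) ^ 2 - 1 := by gcongr
    _ = (1 - τ ^ 2) / τ ^ 2 := by field_simp

theorem sqrt_five_mul_sqrt_le_sqrt_one_sub_sq_div_sq (hm : 1 ≤ m) (hτ0 : 0 < τ)
    (hτ1 : τ ≤ 1 / √(6 * m)) : √5 * √m ≤ √((1 - τ ^ 2) / τ ^ 2) := by
  rw [← Real.sqrt_mul (by norm_num)]
  apply Real.sqrt_le_sqrt
  linarith [sub_one_le_one_sub_sq_div_sq hτ0 hτ1]

theorem five_fourths_mul_sub_add_le (hm : 2 / 7 ≤ m) :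
    5 / 4 * m - 7 / 4 + 1 / (2 * m) ≤ 5 / 4 * m := by
  have : 1 / (2 * m) ≤ 7 / 4 := by
    rw [div_le_iff₀ (by linarith)]
    linarith
  linarith

theorem sqrt_five_fourths_mul (m : ℝ) : √(5 / 4 * m) = √5 / 2 * √m := by
  rw [Real.sqrt_mul (by norm_num), Real.sqrt_div (by norm_num), show (4 : ℝ) = 2 ^ 2 by norm_num,
    Real.sqrt_sq (by norm_num)]

theorem sqrt_div_twelve (m : ℝ) : √(m / 12) = √3 / 6 * √m := by
  rw [show m / 12 = 3 / 6 ^ 2 * m by ring, Real.sqrt_mul (by norm_num),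
    Real.sqrt_div (by norm_num), Real.sqrt_sq (by norm_num)]

theorem mul_sqrt_le_noise_numerator (hm : 1 ≤ m) (hτ0 : 0 < τ) (hτ1 : τ ≤ 1 / √(6 * m)) :
    (√5 - √3) / 6 * √m ≤
      2 / 3 * √((1 - τ ^ 2) / τ ^ 2) -
        (√(5 / 4 * m - 7 / 4 + 1 / (2 * m)) + √(m / 12)) :=
  calc
    (√5 - √3) / 6 * √m = 2 / 3 * (√5 * √m) - (√(5 / 4 * m) + √(m / 12)) := by
      rw [sqrt_five_fourths_mul, sqrt_div_twelve]
      ring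
    _ ≤ _ := by
      gcongr
      · exact sqrt_five_mul_sqrt_le_sqrt_one_sub_sq_div_sq hm hτ0 hτ1
      · exact five_fourths_mul_sub_add_le (by linarith)

theorem noise_denominator_le (τ : ℝ) : 4 / 3 * √(1 - τ ^ 2) + 1 ≤ 7 / 3 := by
  have : √(1 - τ ^ 2) ≤ 1 := Real.sqrt_le_one.mpr (sub_le_self 1 (sq_nonneg τ))
  linarith

theorem le_sqrt_five_sub_sqrt_three_div_six : 0.07 ≤ (√5 - √3) / 6 := by
  have sqrt_five_ge : 2.2 ≤ √5 := Real.le_sqrt_of_sq_le (by norm_num)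
  have sqrt_three_le : √3 ≤ 1.75 := Real.sqrt_le_iff.mpr (by norm_num)
  linarith

theorem noise_strength_function_lower_bound_general (hm : 1 ≤ m) (hτ0 : 0 < τ)
    (hτ1 : τ ≤ 1 / √(6 * m)) :
    0.03 * √m ≤
      (2 / 3 * √((1 - τ ^ 2) / τ ^ 2) -
          (√(5 / 4 * m - 7 / 4 + 1 / (2 * m)) + √(m / 12))) /
        (4 / 3 * √(1 - τ ^ 2) + 1) := by
  rw [le_div_iff₀ (by positivity)]
  calc
    0.03 * √m * (4 / 3 * √(1 - τ ^ 2) + 1) ≤ 0.03 * √m * (7 / 3) := by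
      gcongr
      exact noise_denominator_le τ
    _ = 0.07 * √m := by ring
    _ ≤ (√5 - √3) / 6 * √m := by
      gcongr
      exact le_sqrt_five_sub_sqrt_three_div_six
    _ ≤ _ := mul_sqrt_le_noise_numerator hm hτ0 hτ1

end

/-- **Lower bound on the noise-strength function** (eq. (3.12)).  For every integer
`M ≥ 1` and every real `τ` with `0 < τ ≤ 1/√(6M)`, the quantity `f(M, τ) = F/G`, where
`F = (2/3)√((1-τ²)/τ²) - (√((5/4)M - 7/4 + 1/(2M)) + √(M/12))` and
`G = (4/3)√(1-τ²) + 1`, satisfies `f(M, τ) ≥ 0.03 √M`. -/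
theorem noise_strength_function_lower_bound
    (M : ℕ) (hM : 1 ≤ M) (τ : ℝ) (hτ0 : 0 < τ)
    (hτ1 : τ ≤ 1 / Real.sqrt (6 * (M : ℝ))) :
    0.03 * Real.sqrt (M : ℝ) ≤
      ((2 / 3) * Real.sqrt ((1 - τ ^ 2) / τ ^ 2) -
          (Real.sqrt ((5 / 4) * (M : ℝ) - 7 / 4 + 1 / (2 * (M : ℝ))) +
            Real.sqrt ((M : ℝ) / 12))) /
        ((4 / 3) * Real.sqrt (1 - τ ^ 2) + 1) :=
  noise_strength_function_lower_bound_general (Nat.one_le_cast.mpr hM) hτ0 hτ1
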